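/- arXiv:1012.1797 — 2 statements merged into one kernel-verified Lean document; each statement's English description precedes it below -/
import Mathlib

section
/- Let k ≥ 1, n ≥ 1 and N ≥ n be integers. If Ψ ∈ J_k^o(n,N) and γ_1, γ_2 ∈ J_k^{reg}(1,n) satisfy Ψ ∘ γ_1 = 0 and Ψ ∘ γ_2 = 0, then there exists φ ∈ J_k^{reg}(1,1) such that γ_1 = γ_2 ∘ φ. -/
open scoped BigOperators

namespace JetPaper

/-- Monomials in `u` variables of degree between `1` and `k`:
these index a basis of `⊕_{j=1}^k Sym^j ℂ^u`. -/
def Mon (u k : ℕ) : Type := {m : Fin u → ℕ // 0 < ∑ i, m i ∧ ∑ i, m i ≤ k}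

noncomputable instance (u k : ℕ) : Fintype (Mon u k) :=
  Fintype.ofInjective
    (fun m : Mon u k => (fun i => (⟨m.1 i, Nat.lt_succ_of_le
        ((Finset.single_le_sum (fun _ _ => Nat.zero_le _) (Finset.mem_univ i)).trans
          m.2.2)⟩ : Fin (k + 1))))
    (fun m m' h => Subtype.ext (funext fun i => congrArg Fin.val (congrFun h i)))

/-- The space `J_k(u,v)` of `k`-jets at the origin of holomorphic maps `(ℂ^u,0) → (ℂ^v,0)`,
described by the coefficients (indexed by monomials of degree `1,…,k` in `u` variables)
of the `v` coordinate polynomials. -/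
abbrev Jet (k u v : ℕ) : Type := Fin v → Mon u k → ℂ

/-- The tuple of coordinate polynomials of a jet. -/
noncomputable def toPoly {k u v : ℕ} (γ : Jet k u v) : Fin v → MvPolynomial (Fin u) ℂ :=
  fun i => ∑ m : Mon u k, MvPolynomial.monomial (Finsupp.equivFunOnFinite.symm m.1) (γ i m)

/-- Composition of jets `Ψ ∘ γ`: substitution of the coordinate polynomials of `γ` into
those of `Ψ`, followed by deletion of all terms of degree greater than `k`
(only the coefficients of monomials of degree `1,…,k` are recorded). -/
noncomputable def jetComp {k u v w : ℕ} (Ψ : Jet k v w) (γ : Jet k u v) : Jet k u w :=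
  fun i m => MvPolynomial.coeff (Finsupp.equivFunOnFinite.symm m.1)
    (MvPolynomial.aeval (toPoly γ) (toPoly Ψ i))

/-- The linear part of a jet, as a matrix. -/
noncomputable def linPart {k u v : ℕ} (γ : Jet k u v) : Matrix (Fin v) (Fin u) ℂ :=
  fun i j => MvPolynomial.coeff (Finsupp.single j 1) (toPoly γ i)

/-- The dimension of the kernel of the linear part of a jet. -/
noncomputable def kerDim {k n N : ℕ} (Ψ : Jet k n N) : ℕ :=
  Module.finrank ℂ (LinearMap.ker (Matrix.mulVecLin (linPart Ψ)))

/-- First-order Taylor expansion modulo a power of `X`. -/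
lemma aeval_sub_const_dvd {n : ℕ} (b : Fin n → Polynomial ℂ) (hb : ∀ i, Polynomial.X ∣ b i)
    (P : MvPolynomial (Fin n) ℂ) :
    Polynomial.X ∣ MvPolynomial.aeval b P - Polynomial.C (MvPolynomial.coeff 0 P) := by
  induction P using MvPolynomial.induction_on with
  | C a => simp
  | add p q hp hq =>
    have := dvd_add hp hq
    simp only [map_add, MvPolynomial.coeff_add]
    convert this using 1
    ring
  | mul_X p i hp =>
    have h0 : MvPolynomial.coeff 0 (p * MvPolynomial.X i) = 0 := by
      simp [MvPolynomial.coeff_mul_X']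
    rw [h0]
    simp only [map_mul, MvPolynomial.aeval_X, map_zero, sub_zero]
    exact (hb i).mul_left _

lemma taylor_dvd {n : ℕ} (m : ℕ) (a b : Fin n → Polynomial ℂ)
    (ha : ∀ i, Polynomial.X ∣ a i) (hb : ∀ i, Polynomial.X ∣ b i)
    (hab : ∀ i, Polynomial.X ^ m ∣ a i - b i)
    (P : MvPolynomial (Fin n) ℂ) :
    Polynomial.X ^ (m + 1) ∣ MvPolynomial.aeval a P - MvPolynomial.aeval b P
      - ∑ i, Polynomial.C (MvPolynomial.coeff (Finsupp.single i 1) P) * (a i - b i) := by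
  induction P using MvPolynomial.induction_on with
  | C c =>
    have : ∀ i : Fin n, MvPolynomial.coeff (Finsupp.single i 1) (MvPolynomial.C c) = 0 := by
      intro i
      rw [MvPolynomial.coeff_C, if_neg]
      intro h
      have := DFunLike.congr_fun h i
      simp at this
    simp [this]
  | add p q hp hq =>
    have := dvd_add hp hq
    simp only [map_add, MvPolynomial.coeff_add, add_mul, Finset.sum_add_distrib]
    convert this using 1
    ring
  | mul_X p i hp =>
    have hc : ∀ j : Fin n, MvPolynomial.coeff (Finsupp.single j 1) (p * MvPolynomial.X i)
        = if j = i then MvPolynomial.coeff 0 p else 0 := by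
      intro j
      rw [MvPolynomial.coeff_mul_X']
      by_cases h : j = i
      · subst h; simp
      · have : i ∉ (Finsupp.single j 1 : Fin n →₀ ℕ).support := by
          simpa using Ne.symm h
        rw [if_neg this, if_neg h]
    have hs : ∑ j, Polynomial.C (MvPolynomial.coeff (Finsupp.single j 1)
        (p * MvPolynomial.X i)) * (a j - b j)
        = Polynomial.C (MvPolynomial.coeff 0 p) * (a i - b i) := by
      simp only [hc]
      rw [Finset.sum_eq_single i]
      · simp
      · intro j _ hj; simp [hj]
      · simp
    rw [hs]
    have hd : Polynomial.X ^ m ∣ MvPolynomial.aeval a p - MvPolynomial.aeval b p := by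
      have h1 := (pow_dvd_pow (Polynomial.X : Polynomial ℂ) (Nat.le_succ m)).trans hp
      have h2 : Polynomial.X ^ m ∣ ∑ i, Polynomial.C (MvPolynomial.coeff (Finsupp.single i 1) p)
          * (a i - b i) := Finset.dvd_sum fun i _ => (hab i).mul_left _
      simpa using dvd_add h1 h2
    have h1 : Polynomial.X ^ (m + 1) ∣
        (MvPolynomial.aeval a p - MvPolynomial.aeval b p) * a i := by
      rw [pow_succ]; exact mul_dvd_mul hd (ha i)
    have h2 : Polynomial.X ^ (m + 1) ∣ (MvPolynomial.aeval b p
        - Polynomial.C (MvPolynomial.coeff 0 p)) * (a i - b i) := by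
      rw [pow_succ']; exact mul_dvd_mul (aeval_sub_const_dvd b hb p) (hab i)
    have := dvd_add h1 h2
    simp only [map_mul, MvPolynomial.aeval_X]
    convert this using 1
    ring

/-- Polynomials in one variable, as univariate polynomials. -/
noncomputable def toUni : MvPolynomial (Fin 1) ℂ →ₐ[ℂ] Polynomial ℂ :=
  MvPolynomial.aeval (fun _ => Polynomial.X)

lemma coeff_toUni (p : MvPolynomial (Fin 1) ℂ) (m : Fin 1 →₀ ℕ) :
    (toUni p).coeff (m 0) = MvPolynomial.coeff m p := by
  induction p using MvPolynomial.induction_on' with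
  | add p q hp hq => simp [hp, hq]
  | monomial u a =>
    simp only [toUni, MvPolynomial.aeval_monomial, MvPolynomial.coeff_monomial]
    have : (u.prod fun _ e => (Polynomial.X : Polynomial ℂ) ^ e) = Polynomial.X ^ (u 0) := by
      rw [Finsupp.prod_fintype _ _ (by simp)]; simp
    rw [this, ← Polynomial.C_eq_algebraMap, Polynomial.coeff_C_mul_X_pow]
    have : m 0 = u 0 ↔ u = m := by
      constructor
      · intro h
        refine Finsupp.ext fun i => ?_
        fin_cases i; exact h.symm
      · rintro rfl; rfl
    simp [this]

lemma coeff_toUni' (p : MvPolynomial (Fin 1) ℂ) (j : ℕ) :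
    (toUni p).coeff j = MvPolynomial.coeff (Finsupp.single 0 j) p := by
  rw [← coeff_toUni]; simp

lemma coeff_toPoly_mon {k u v : ℕ} (γ : Jet k u v) (i : Fin v) (m : Mon u k) :
    MvPolynomial.coeff (Finsupp.equivFunOnFinite.symm m.1) (toPoly γ i) = γ i m := by
  classical
  simp only [toPoly, MvPolynomial.coeff_sum, MvPolynomial.coeff_monomial]
  rw [Finset.sum_eq_single m]
  · simp
  · intro b _ hb
    rw [if_neg]
    intro h
    exact hb (Subtype.ext (Finsupp.equivFunOnFinite.symm.injective h))
  · simp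

lemma coeff_toPoly_eq_zero {k u v : ℕ} (γ : Jet k u v) (i : Fin v) (m : Fin u →₀ ℕ)
    (hm : ¬ (0 < ∑ i, m i ∧ ∑ i, m i ≤ k)) :
    MvPolynomial.coeff m (toPoly γ i) = 0 := by
  classical
  simp only [toPoly, MvPolynomial.coeff_sum, MvPolynomial.coeff_monomial]
  apply Finset.sum_eq_zero
  intro b _
  rw [if_neg]
  rintro rfl
  exact hm b.2

/-- The univariate polynomials of a curve jet. -/
noncomputable def curve {k v : ℕ} (γ : Jet k 1 v) (i : Fin v) : Polynomial ℂ :=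
  toUni (toPoly γ i)

lemma X_dvd_curve {k v : ℕ} (γ : Jet k 1 v) (i : Fin v) : Polynomial.X ∣ curve γ i := by
  rw [Polynomial.X_dvd_iff, curve, coeff_toUni']
  exact coeff_toPoly_eq_zero _ _ _ (by simp)

lemma toUni_aeval {n : ℕ} (a : Fin n → MvPolynomial (Fin 1) ℂ) (P : MvPolynomial (Fin n) ℂ) :
    toUni (MvPolynomial.aeval a P) = MvPolynomial.aeval (fun i => toUni (a i)) P := by
  rw [← AlgHom.comp_apply, MvPolynomial.comp_aeval]

lemma X_dvd_aeval {k u v : ℕ} (Ψ : Jet k u v) (l : Fin v) (a : Fin u → Polynomial ℂ)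
    (ha : ∀ i, Polynomial.X ∣ a i) : Polynomial.X ∣ MvPolynomial.aeval a (toPoly Ψ l) := by
  have := aeval_sub_const_dvd a ha (toPoly Ψ l)
  rwa [coeff_toPoly_eq_zero _ _ _ (by simp), map_zero, sub_zero] at this

lemma dvd_of_jetComp {k n N : ℕ} (Ψ : Jet k n N) (γ : Jet k 1 n) (h : jetComp Ψ γ = 0)
    (l : Fin N) : Polynomial.X ^ (k + 1) ∣ MvPolynomial.aeval (curve γ) (toPoly Ψ l) := by
  rw [Polynomial.X_pow_dvd_iff]
  intro d hd
  rcases Nat.eq_zero_or_pos d with rfl | hpos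
  · exact Polynomial.X_dvd_iff.1 (X_dvd_aeval Ψ l _ (X_dvd_curve γ))
  · have := congrFun (congrFun h l) ⟨fun _ => d, by simp; omega⟩
    simp only [jetComp, Pi.zero_apply] at this
    rw [← coeff_toUni, toUni_aeval] at this
    exact this

lemma curve_of {k : ℕ} (f : Polynomial ℂ) (hf : f.natDegree ≤ k) (h0 : f.coeff 0 = 0) :
    curve (fun _ m => f.coeff (m.1 0) : Jet k 1 1) 0 = f := by
  ext j
  rw [curve, coeff_toUni']
  by_cases hj : 0 < j ∧ j ≤ k
  · have := coeff_toPoly_mon (fun _ m => f.coeff (m.1 0) : Jet k 1 1) 0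
      ⟨fun _ => j, by simpa using hj⟩
    convert this using 2
    refine Finsupp.ext fun i => ?_
    fin_cases i; simp
  · rw [coeff_toPoly_eq_zero _ _ _ (by simpa using hj)]
    rcases Nat.eq_zero_or_pos j with rfl | hpos
    · exact h0.symm
    · exact (Polynomial.coeff_eq_zero_of_natDegree_lt (by omega)).symm

lemma curve_step {k n N : ℕ} (Ψ : Jet k n N) (hΨ : kerDim Ψ = 1)
    (γ₁ γ₂ : Jet k 1 n) (hγ₂ : linPart γ₂ ≠ 0) (hk : 1 ≤ k)
    (h₁ : jetComp Ψ γ₁ = 0) (h₂ : jetComp Ψ γ₂ = 0) (j : ℕ) (hj : j ≤ k) :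
    ∃ f : Polynomial ℂ, f.natDegree ≤ k ∧ f.coeff 0 = 0 ∧
      ∀ i, Polynomial.X ^ (j + 1) ∣
        curve γ₁ i - MvPolynomial.aeval (fun _ => f) (toPoly γ₂ i) := by
  -- a generic fact about kernels
  have key : ∀ (γ₁ : Jet k 1 n), jetComp Ψ γ₁ = 0 → ∀ (f : Polynomial ℂ), f.coeff 0 = 0 → ∀ j, j + 1 ≤ k →
      (∀ i, Polynomial.X ^ (j + 1) ∣
        curve γ₁ i - MvPolynomial.aeval (fun _ => f) (toPoly γ₂ i)) →
      (linPart Ψ).mulVec (fun i =>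
        (curve γ₁ i - MvPolynomial.aeval (fun _ => f) (toPoly γ₂ i)).coeff (j + 1)) = 0 := by
    intro γ₁ h₁ f hf j hj hd
    have hX : Polynomial.X ∣ f := Polynomial.X_dvd_iff.2 hf
    ext l
    have ht := taylor_dvd (j + 1) (curve γ₁)
      (fun i => MvPolynomial.aeval (fun _ => f) (toPoly γ₂ i)) (X_dvd_curve γ₁)
      (fun i => X_dvd_aeval γ₂ i _ (fun _ => hX)) hd (toPoly Ψ l)
    have hle : (Polynomial.X : Polynomial ℂ) ^ (j + 1 + 1) ∣ Polynomial.X ^ (k + 1) :=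
      pow_dvd_pow _ (by omega)
    have e1 := hle.trans (dvd_of_jetComp Ψ γ₁ h₁ l)
    have e2 : (Polynomial.X : Polynomial ℂ) ^ (j + 1 + 1) ∣
        MvPolynomial.aeval (fun i => MvPolynomial.aeval (fun _ => f) (toPoly γ₂ i))
          (toPoly Ψ l) := by
      refine hle.trans ((pow_dvd_pow_of_dvd hX (k + 1)).trans ?_)
      have := map_dvd (Polynomial.aeval f) (dvd_of_jetComp Ψ γ₂ h₂ l)
      rw [map_pow, Polynomial.aeval_X] at this
      convert this using 1
      rw [← AlgHom.comp_apply, MvPolynomial.comp_aeval]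
      congr 2
      ext1 i
      rw [curve, toUni, ← AlgHom.comp_apply, MvPolynomial.comp_aeval]
      simp
    have e3 := (dvd_sub_right (dvd_sub e1 e2)).1 ht
    have e4 := Polynomial.X_pow_dvd_iff.1 e3 (j + 1) (by omega)
    simp only [Polynomial.finsetSum_coeff, Polynomial.coeff_C_mul] at e4
    simpa [Matrix.mulVec, dotProduct, linPart] using e4
  have lin : ∀ (f e : Polynomial ℂ) (m : ℕ), f.coeff 0 = 0 → e.coeff 0 = 0 →
      Polynomial.X ^ m ∣ f - e → ∀ i, Polynomial.X ^ (m + 1) ∣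
        MvPolynomial.aeval (fun _ => f) (toPoly γ₂ i)
        - MvPolynomial.aeval (fun _ => e) (toPoly γ₂ i)
        - Polynomial.C (linPart γ₂ i 0) * (f - e) := by
    intro f e m hf he hd i
    have := taylor_dvd m (fun _ : Fin 1 => f) (fun _ => e) (fun _ => Polynomial.X_dvd_iff.2 hf)
      (fun _ => Polynomial.X_dvd_iff.2 he) (fun _ => hd) (toPoly γ₂ i)
    simpa [linPart] using this
  induction j with
  | zero =>
    refine ⟨0, by simp, by simp, fun i => ?_⟩
    rw [zero_add, pow_one]
    exact dvd_sub (X_dvd_curve γ₁ i) (X_dvd_aeval γ₂ i _ (fun _ => dvd_zero _))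
  | succ j ih =>
    obtain ⟨f, hfd, hf0, hf⟩ := ih (by omega)
    have hker := key γ₁ h₁ f hf0 j hj hf
    have hz : ∀ i, MvPolynomial.aeval (fun _ : Fin 1 => (0 : Polynomial ℂ)) (toPoly γ₂ i) = 0 := by
      intro i
      have hc : MvPolynomial.coeff 0 (toPoly γ₂ i) = 0 := coeff_toPoly_eq_zero _ _ _ (by simp)
      have := MvPolynomial.aeval_zero' (S₁ := Polynomial ℂ) (toPoly γ₂ i)
      rw [this, MvPolynomial.constantCoeff_eq, hc, map_zero]
    have hker2 := key γ₂ h₂ 0 (by simp) 0 (by omega) (fun i => by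
      rw [hz, sub_zero, zero_add, pow_one]; exact X_dvd_curve γ₂ i)
    simp only [hz, sub_zero, zero_add, curve, coeff_toUni'] at hker2
    change (linPart Ψ).mulVec (fun i => linPart γ₂ i 0) = 0 at hker2
    have hne : (⟨fun i => linPart γ₂ i 0, by
        simpa using hker2⟩ : LinearMap.ker (Matrix.mulVecLin (linPart Ψ))) ≠ 0 := by
      intro h
      apply hγ₂
      ext i q
      fin_cases q
      exact congrFun (congrArg Subtype.val h) i
    obtain ⟨c, hc⟩ := (finrank_eq_one_iff_of_nonzero' _ hne).1 hΨ ⟨_, by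
      simpa using hker⟩
    have hc' := fun i => congrFun (congrArg Subtype.val hc) i
    simp only [SetLike.mk_smul_mk, Pi.smul_apply, smul_eq_mul] at hc'
    set e := f + Polynomial.C c * Polynomial.X ^ (j + 1) with he
    have he0 : e.coeff 0 = 0 := by simp [he, hf0]
    have hef : e - f = Polynomial.C c * Polynomial.X ^ (j + 1) := by rw [he]; ring
    refine ⟨e, ?_, he0, fun i => ?_⟩
    · refine (Polynomial.natDegree_add_le _ _).trans (max_le hfd ?_)
      exact (Polynomial.natDegree_C_mul_X_pow_le _ _).trans hj
    · have hl := lin e f (j + 1) he0 hf0 (by rw [hef]; exact dvd_mul_left _ _) i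
      have hr : Polynomial.X ^ (j + 1 + 1) ∣ curve γ₁ i
          - MvPolynomial.aeval (fun _ => f) (toPoly γ₂ i)
          - Polynomial.C (linPart γ₂ i 0) * (e - f) := by
        rw [Polynomial.X_pow_dvd_iff]
        intro d hd
        rw [hef, ← mul_assoc, ← Polynomial.C_mul, Polynomial.coeff_sub,
          Polynomial.coeff_C_mul_X_pow]
        split_ifs with hdj
        · rw [hdj, Polynomial.coeff_sub, ← hc' i]; ring
        · rw [Polynomial.X_pow_dvd_iff.1 (hf i) d (by omega), sub_zero]
      have := dvd_sub hr hl
      convert this using 1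
      ring

/-- If `Ψ ∈ J_k^o(n,N)` and `γ₁, γ₂ ∈ J_k^{reg}(1,n)` satisfy
`Ψ ∘ γ₁ = 0` and `Ψ ∘ γ₂ = 0`, then there exists `φ ∈ J_k^{reg}(1,1)` with `γ₁ = γ₂ ∘ φ`. -/
theorem test_curve_uniqueness (k n N : ℕ) (hk : 1 ≤ k) (hn : 1 ≤ n) (hN : n ≤ N)
    (Ψ : Jet k n N) (hΨ : kerDim Ψ = 1)
    (γ₁ γ₂ : Jet k 1 n) (hγ₁ : linPart γ₁ ≠ 0) (hγ₂ : linPart γ₂ ≠ 0)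
    (h₁ : jetComp Ψ γ₁ = 0) (h₂ : jetComp Ψ γ₂ = 0) :
    ∃ φ : Jet k 1 1, linPart φ ≠ 0 ∧ γ₁ = jetComp γ₂ φ := by
  obtain ⟨f, hfd, hf0, hf⟩ := curve_step Ψ hΨ γ₁ γ₂ hγ₂ hk h₁ h₂ k le_rfl
  have hφ := curve_of f hfd hf0
  refine ⟨fun _ m => f.coeff (m.1 0), ?_, ?_⟩
  · intro h
    have hf1 : f.coeff 1 = 0 := by
      rw [← hφ, curve, coeff_toUni']
      exact congrFun (congrFun h 0) 0
    have hX2 : Polynomial.X ^ 2 ∣ f := by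
      rw [Polynomial.X_pow_dvd_iff]
      intro d hd
      interval_cases d <;> assumption
    apply hγ₁
    ext i q
    fin_cases q
    have ht := taylor_dvd 1 (fun _ : Fin 1 => f) (fun _ => 0)
      (fun _ => Polynomial.X_dvd_iff.2 hf0) (fun _ => dvd_zero _)
      (fun _ => by simpa using Polynomial.X_dvd_iff.2 hf0) (toPoly γ₂ i)
    have hz : MvPolynomial.aeval (fun _ : Fin 1 => (0 : Polynomial ℂ)) (toPoly γ₂ i) = 0 := by
      have hc : MvPolynomial.coeff 0 (toPoly γ₂ i) = 0 := coeff_toPoly_eq_zero _ _ _ (by simp)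
      have := MvPolynomial.aeval_zero' (S₁ := Polynomial ℂ) (toPoly γ₂ i)
      rw [this, MvPolynomial.constantCoeff_eq, hc, map_zero]
    rw [hz, sub_zero] at ht
    have h3 := (dvd_sub_left (Finset.dvd_sum fun q _ => by
      rw [sub_zero]; exact hX2.mul_left _)).1 ht
    have h4 := dvd_add ((pow_dvd_pow _ (by omega : 2 ≤ k + 1)).trans (hf i)) h3
    rw [sub_add_cancel] at h4
    have h5 := Polynomial.X_pow_dvd_iff.1 h4 1 (by omega)
    rw [curve, coeff_toUni'] at h5
    exact h5
  · ext i m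
    have hm := Polynomial.X_pow_dvd_iff.1 (hf i) (m.1 0) (by
      have := m.2.2
      simp at this
      omega)
    rw [Polynomial.coeff_sub, sub_eq_zero] at hm
    rw [jetComp, ← coeff_toPoly_mon γ₁ i m, ← coeff_toUni, ← coeff_toUni, toUni_aeval]
    have : (fun q => toUni (toPoly (fun _ m => f.coeff (m.1 0) : Jet k 1 1) q))
        = fun _ => f := by
      funext q
      fin_cases q
      exact hφ
    rw [this]
    exact hm


end JetPaper
end

section
/- Fix integers 1 ≤ p ≤ n, k ≥ 1 and N ≥ n, and set sym^{≤k}(p) = Σ_{i=1}^k dim Sym^i ℂ^p. Then: (i) for every γ ∈ J_k^{reg}(p,n), the set S_γ = {Ψ ∈ J_k(n,N) : Ψ ∘ γ = 0} is a linear subspace of J_k(n,N) of codimension N·sym^{≤k}(p); (ii) for every γ ∈ J_k^{reg}(p,n), the subset S_γ ∩ J_k^o(n,N) is dense in S_γ; (iii) if Ψ ∈ J_k^o(n,N) and γ_1, γ_2 ∈ J_k^{reg}(p,n) satisfy Ψ ∘ γ_1 = Ψ ∘ γ_2 = 0, then there exists φ ∈ J_k^{reg}(p,p) such that γ_1 =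 γ_2 ∘ φ; (iv) for γ_1, γ_2 ∈ J_k^{reg}(p,n), S_{γ_1} = S_{γ_2} if and only if there exists φ ∈ J_k^{reg}(p,p) with γ_1 = γ_2 ∘ φ. -/
open scoped BigOperators

namespace JetPaper

/-- `γ ∈ J_k^{reg}(p,n)`: the linear part `Γ₁ ∈ Hom(ℂ^p, ℂ^n)` has rank `p`. -/
def JetReg (k p n : ℕ) : Set (Jet k p n) := {γ | (linPart γ).rank = p}

/-- `sym^{≤k}(p) = ∑_{i=1}^k dim Sym^i ℂ^p`. -/
def symLe (p k : ℕ) : ℕ := ∑ i ∈ Finset.Icc 1 k, Nat.choose (p + i - 1) (p - 1)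

open MvPolynomial in
/-- The maximal ideal of the origin. -/
noncomputable abbrev mI (u : ℕ) : Ideal (MvPolynomial (Fin u) ℂ) := idealOfVars (Fin u) ℂ

/-- Truncation of a polynomial. -/
noncomputable def ofPoly {u : ℕ} (k : ℕ) (f : MvPolynomial (Fin u) ℂ) : Mon u k → ℂ :=
  fun m => MvPolynomial.coeff (Finsupp.equivFunOnFinite.symm m.1) f

lemma toPoly_mem {k u v : ℕ} (γ : Jet k u v) (i : Fin v) : toPoly γ i ∈ mI u := by
  classical
  rw [← pow_one (mI u)]
  refine Ideal.sum_mem _ fun m _ => ?_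
  rw [MvPolynomial.mem_pow_idealOfVars_iff']
  intro x hx
  rw [MvPolynomial.coeff_monomial, if_neg]
  rintro rfl
  have := m.2.1
  rw [Finsupp.degree_eq_sum] at hx
  simp at hx
  simp [hx] at this

lemma mem_pow_of_ofPoly {k u : ℕ} (f : MvPolynomial (Fin u) ℂ) (hf : f ∈ mI u) :
    f ∈ mI u ^ (k + 1) ↔ ofPoly k f = 0 := by
  rw [← pow_one (mI u), MvPolynomial.mem_pow_idealOfVars_iff'] at hf
  rw [MvPolynomial.mem_pow_idealOfVars_iff']
  constructor
  · intro h
    funext m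
    refine h _ ?_
    rw [Finsupp.degree_eq_sum]
    exact Nat.lt_succ_of_le m.2.2
  · intro h x hx
    by_cases h0 : x.degree < 1
    · exact hf x h0
    · have := congrFun h ⟨x, by rw [Finsupp.degree_eq_sum] at h0; omega,
        by rw [Finsupp.degree_eq_sum] at hx; omega⟩
      simp only [ofPoly, Finsupp.equivFunOnFinite_symm_coe] at this
      exact this

lemma ofPoly_sub {k u : ℕ} (f g : MvPolynomial (Fin u) ℂ) :
    ofPoly k (f - g) = ofPoly k f - ofPoly k g := by
  funext m; simp [ofPoly]

lemma ofPoly_toPoly {k u v : ℕ} (γ : Jet k u v) (i : Fin v) : ofPoly k (toPoly γ i) = γ i := by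
  funext m; exact coeff_toPoly_mon γ i m

lemma ofPoly_eq_iff {k u : ℕ} (f g : MvPolynomial (Fin u) ℂ) (hf : f ∈ mI u) (hg : g ∈ mI u) :
    ofPoly k f = ofPoly k g ↔ f - g ∈ mI u ^ (k + 1) := by
  rw [mem_pow_of_ofPoly _ (Ideal.sub_mem _ hf hg), ofPoly_sub, sub_eq_zero]

/-- Jet from polynomials. -/
noncomputable def mkJet {u v : ℕ} (k : ℕ) (f : Fin v → MvPolynomial (Fin u) ℂ) : Jet k u v :=
  fun i => ofPoly k (f i)

lemma toPoly_mkJet {k u v : ℕ} (f : Fin v → MvPolynomial (Fin u) ℂ) (hf : ∀ i, f i ∈ mI u)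
    (i : Fin v) : toPoly (mkJet k f) i - f i ∈ mI u ^ (k + 1) := by
  rw [← ofPoly_eq_iff _ _ (toPoly_mem _ _) (hf i), ofPoly_toPoly]; rfl

lemma aeval_mem {u v : ℕ} (a : Fin v → MvPolynomial (Fin u) ℂ) (ha : ∀ i, a i ∈ mI u)
    {f : MvPolynomial (Fin v) ℂ} {d : ℕ} (hf : f ∈ mI v ^ d) :
    MvPolynomial.aeval a f ∈ mI u ^ d := by
  have h1 : Ideal.map (MvPolynomial.aeval (R := ℂ) a) (mI v) ≤ mI u := by
    rw [Ideal.map_span, Ideal.span_le]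
    rintro _ ⟨_, ⟨i, rfl⟩, rfl⟩
    simpa using ha i
  have h2 := Ideal.mem_map_of_mem (MvPolynomial.aeval (R := ℂ) a) hf
  rw [Ideal.map_pow] at h2
  exact Ideal.pow_right_mono h1 d h2

lemma aeval_mem_one {u v : ℕ} (a : Fin v → MvPolynomial (Fin u) ℂ) (ha : ∀ i, a i ∈ mI u)
    {f : MvPolynomial (Fin v) ℂ} (hf : f ∈ mI v) :
    MvPolynomial.aeval a f ∈ mI u := by
  rw [← pow_one (mI u)]; rw [← pow_one (mI v)] at hf; exact aeval_mem a ha hf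

lemma aeval_congr_mem {u v : ℕ} (I : Ideal (MvPolynomial (Fin u) ℂ))
    (a b : Fin v → MvPolynomial (Fin u) ℂ) (hab : ∀ i, a i - b i ∈ I)
    (f : MvPolynomial (Fin v) ℂ) :
    MvPolynomial.aeval a f - MvPolynomial.aeval b f ∈ I := by
  rw [← Ideal.Quotient.eq]
  have : (Ideal.Quotient.mkₐ ℂ I).comp (MvPolynomial.aeval a) =
      (Ideal.Quotient.mkₐ ℂ I).comp (MvPolynomial.aeval b) := by
    ext i
    simpa [Ideal.Quotient.eq] using hab i
  exact DFunLike.congr_fun this f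

lemma jetComp_eq {k u v w : ℕ} (Ψ : Jet k v w) (γ : Jet k u v) :
    jetComp Ψ γ = mkJet k (fun i => MvPolynomial.aeval (toPoly γ) (toPoly Ψ i)) := rfl

lemma mkJet_congr {k u v : ℕ} (f g : Fin v → MvPolynomial (Fin u) ℂ) (hf : ∀ i, f i ∈ mI u)
    (hg : ∀ i, g i ∈ mI u) (h : ∀ i, f i - g i ∈ mI u ^ (k + 1)) : mkJet k f = mkJet k g := by
  funext i
  exact (ofPoly_eq_iff _ _ (hf i) (hg i)).2 (h i)

lemma mkJet_toPoly {k u v : ℕ} (γ : Jet k u v) : mkJet k (toPoly γ) = γ :=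
  funext fun i => ofPoly_toPoly γ i

/-- Composition of jets of polynomial maps. -/
lemma jetComp_mkJet {k u v w : ℕ} (f : Fin w → MvPolynomial (Fin v) ℂ)
    (g : Fin v → MvPolynomial (Fin u) ℂ) (hf : ∀ i, f i ∈ mI v) (hg : ∀ i, g i ∈ mI u) :
    jetComp (mkJet k f) (mkJet k g) = mkJet k (fun i => MvPolynomial.aeval g (f i)) := by
  rw [jetComp_eq]
  refine mkJet_congr _ _ (fun i => aeval_mem_one _ (toPoly_mem _) (toPoly_mem _ _))
    (fun i => aeval_mem_one _ hg (hf i)) fun i => ?_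
  have h1 := aeval_mem _ (toPoly_mem (mkJet k g)) (toPoly_mkJet (k := k) f hf i)
  rw [map_sub] at h1
  have h2 := aeval_congr_mem _ _ _ (toPoly_mkJet (k := k) g hg) (f i)
  simpa using Ideal.add_mem _ h1 h2

lemma jetComp_assoc {k t u v w : ℕ} (a : Jet k v w) (b : Jet k u v) (c : Jet k t u) :
    jetComp (jetComp a b) c = jetComp a (jetComp b c) := by
  have hm : ∀ {u v : ℕ} (γ : Jet k u v) (i : Fin v), toPoly γ i ∈ mI u := toPoly_mem
  rw [jetComp_eq a b, jetComp_eq b c]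
  conv_lhs => rw [← mkJet_toPoly c]
  conv_rhs => rw [← mkJet_toPoly a]
  rw [jetComp_mkJet _ _ (fun i => aeval_mem_one _ (hm _) (hm _ _)) (hm c),
    jetComp_mkJet _ _ (hm a) (fun i => aeval_mem_one _ (hm _) (hm _ _))]
  congr 1
  funext i
  have : (MvPolynomial.aeval (R := ℂ) (toPoly c)).comp (MvPolynomial.aeval (toPoly b)) =
      MvPolynomial.aeval (fun i => MvPolynomial.aeval (toPoly c) (toPoly b i)) := by
    ext i; simp
  exact DFunLike.congr_fun this (toPoly a i)

lemma X_mem (u : ℕ) (i : Fin u) : (MvPolynomial.X i : MvPolynomial (Fin u) ℂ) ∈ mI u :=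
  Ideal.subset_span ⟨i, rfl⟩

/-- The identity jet. -/
noncomputable def idJet (k u : ℕ) : Jet k u u := mkJet k MvPolynomial.X

lemma id_comp {k u v : ℕ} (γ : Jet k u v) : jetComp (idJet k v) γ = γ := by
  conv_lhs => rw [← mkJet_toPoly γ]
  rw [idJet, jetComp_mkJet _ _ (X_mem v) (toPoly_mem γ)]
  simp [mkJet_toPoly]

lemma comp_id {k u v : ℕ} (γ : Jet k u v) : jetComp γ (idJet k u) = γ := by
  conv_lhs => rw [← mkJet_toPoly γ]
  rw [idJet, jetComp_mkJet _ _ (toPoly_mem γ) (X_mem u)]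
  simp [mkJet_toPoly]

/-- Left linear structure. -/
noncomputable def compL {k u v : ℕ} (w : ℕ) (γ : Jet k u v) : Jet k v w →ₗ[ℂ] Jet k u w where
  toFun Ψ := jetComp Ψ γ
  map_add' a b := by
    funext i m
    have : toPoly (a + b) i = toPoly a i + toPoly b i := by
      simp [toPoly, Finset.sum_add_distrib]
    simp [jetComp, this]
  map_smul' c a := by
    funext i m
    have : toPoly (c • a) i = c • toPoly a i := by
      simp [toPoly, Finset.smul_sum, MvPolynomial.smul_monomial]
    simp [jetComp, this]

lemma compL_apply {k u v w : ℕ} (γ : Jet k u v) (Ψ : Jet k v w) : compL w γ Ψ = jetComp Ψ γ := rfl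

lemma mem_iff_constantCoeff {u : ℕ} (f : MvPolynomial (Fin u) ℂ) :
    f ∈ mI u ↔ MvPolynomial.coeff 0 f = 0 := by
  rw [← pow_one (mI u), MvPolynomial.mem_pow_idealOfVars_iff']
  simp [Finsupp.degree_eq_zero_iff]

/-- The linear approximation. -/
lemma sub_lin_mem {u : ℕ} (f : MvPolynomial (Fin u) ℂ) (hf : f ∈ mI u) :
    f - ∑ j, MvPolynomial.C (MvPolynomial.coeff (Finsupp.single j 1) f) * MvPolynomial.X j
      ∈ mI u ^ 2 := by
  classical
  rw [MvPolynomial.mem_pow_idealOfVars_iff']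
  intro x hx
  have hx' : x.degree = 0 ∨ x.degree = 1 := by omega
  rcases hx' with h | h
  · rw [Finsupp.degree_eq_zero_iff] at h
    subst h
    simp [(mem_iff_constantCoeff f).1 hf, MvPolynomial.coeff_sum]
  · obtain ⟨i, rfl⟩ : ∃ i, x = Finsupp.single i 1 := by
      have h0 : x ≠ 0 := by rintro rfl; simp at h
      obtain ⟨i, hi⟩ := Finsupp.ne_iff.1 h0
      have hle : Finsupp.single i 1 ≤ x := by
        rw [Finsupp.single_le_iff]; simpa [Nat.one_le_iff_ne_zero] using hi
      obtain ⟨c, rfl⟩ := le_iff_exists_add.1 hle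
      have hc : c.degree = 0 := by simpa using h
      rw [Finsupp.degree_eq_zero_iff] at hc
      exact ⟨i, by simp [hc]⟩
    simp [MvPolynomial.coeff_sum, MvPolynomial.coeff_C_mul, MvPolynomial.coeff_X,
      Finsupp.single_left_inj]

lemma coeff_single_of_mem {u : ℕ} {f : MvPolynomial (Fin u) ℂ} (hf : f ∈ mI u ^ 2) (j : Fin u) :
    MvPolynomial.coeff (Finsupp.single j 1) f = 0 := by
  rw [MvPolynomial.mem_pow_idealOfVars_iff'] at hf
  exact hf _ (by simp)

lemma linPart_mkJet {k u v : ℕ} (hk : 1 ≤ k) (f : Fin v → MvPolynomial (Fin u) ℂ)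
    (hf : ∀ i, f i ∈ mI u) (i : Fin v) (j : Fin u) :
    linPart (mkJet k f) i j = MvPolynomial.coeff (Finsupp.single j 1) (f i) := by
  have := coeff_single_of_mem (Ideal.pow_le_pow_right (by omega) (toPoly_mkJet (k := k) f hf i)) j
  rw [MvPolynomial.coeff_sub, sub_eq_zero] at this
  exact this

lemma linPart_comp {k u v w : ℕ} (hk : 1 ≤ k) (a : Jet k v w) (b : Jet k u v) :
    linPart (jetComp a b) = linPart a * linPart b := by
  ext i j
  rw [jetComp_eq, linPart_mkJet hk _
    (fun i => aeval_mem_one _ (toPoly_mem _) (toPoly_mem _ _))]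
  have := coeff_single_of_mem (aeval_mem _ (toPoly_mem b) (sub_lin_mem _ (toPoly_mem a i))) j
  rw [map_sub, MvPolynomial.coeff_sub, sub_eq_zero] at this
  rw [this, Matrix.mul_apply]
  simp only [map_sum, map_mul, MvPolynomial.aeval_X, MvPolynomial.coeff_sum,
    MvPolynomial.algHom_C, MvPolynomial.algebraMap_eq, MvPolynomial.coeff_C_mul]
  rfl

lemma linPart_id {k u : ℕ} (hk : 1 ≤ k) : linPart (idJet k u) = 1 := by
  classical
  ext i j
  rw [idJet, linPart_mkJet hk _ (X_mem u)]
  simp [MvPolynomial.coeff_X, Matrix.one_apply, Finsupp.single_left_inj]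

lemma linPart_add {k u v : ℕ} (a b : Jet k u v) : linPart (a + b) = linPart a + linPart b := by
  ext i j
  have : toPoly (a + b) i = toPoly a i + toPoly b i := by
    simp [toPoly, Finset.sum_add_distrib]
  simp [linPart, this]

lemma linPart_smul {k u v : ℕ} (c : ℂ) (a : Jet k u v) : linPart (c • a) = c • linPart a := by
  ext i j
  have : toPoly (c • a) i = c • toPoly a i := by
    simp [toPoly, Finset.smul_sum, MvPolynomial.smul_monomial]
  simp [linPart, this]

lemma linPart_row {k u v w : ℕ} (a : Jet k u v) (b : Jet k u w) (i : Fin v) (j : Fin w)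
    (h : a i = b j) : linPart a i = linPart b j := by
  funext l
  simp [linPart, toPoly, h]

lemma jetComp_row {k t u v w : ℕ} (a : Jet k u v) (b : Jet k u w) (c : Jet k t u) (i : Fin v)
    (j : Fin w) (h : a i = b j) : jetComp a c i = jetComp b c j := by
  funext l
  simp [jetComp, toPoly, h]

lemma near_id {u : ℕ} (a : Fin u → MvPolynomial (Fin u) ℂ) (ha : ∀ i, a i ∈ mI u)
    (h : ∀ i, a i - MvPolynomial.X i ∈ mI u ^ 2) (d : ℕ) :
    ∀ f ∈ mI u ^ d, MvPolynomial.aeval a f - f ∈ mI u ^ (d + 1) := by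
  have hX : ∀ f : MvPolynomial (Fin u) ℂ, MvPolynomial.aeval a f - f ∈ mI u ^ 2 := by
    intro f
    simpa using aeval_congr_mem _ _ _ h f
  induction d with
  | zero =>
    intro f _
    exact Ideal.pow_le_pow_right (by omega) (hX f)
  | succ d ih =>
    intro f hf
    rw [pow_succ] at hf
    induction hf using Submodule.mul_induction_on' with
    | mem_mul_mem x hx y hy =>
      have e : MvPolynomial.aeval a (x * y) - x * y =
          MvPolynomial.aeval a x * (MvPolynomial.aeval a y - y)
            + (MvPolynomial.aeval a x - x) * y := by
        rw [map_mul]; ring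
      rw [e]
      refine Ideal.add_mem _ ?_ ?_
      · have := Ideal.mul_mem_mul (aeval_mem a ha hx) (hX y)
        rwa [← pow_add] at this
      · rw [pow_succ]
        exact Ideal.mul_mem_mul (ih x hx) hy
    | add x hx y hy h1 h2 =>
      have e : MvPolynomial.aeval a (x + y) - (x + y) =
          (MvPolynomial.aeval a x - x) + (MvPolynomial.aeval a y - y) := by
        rw [map_add]; ring
      rw [e]
      exact Ideal.add_mem _ h1 h2

lemma lift_exists {u v : ℕ} (F : Fin v → MvPolynomial (Fin u) ℂ) (hF : ∀ i, F i ∈ mI u)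
    (g : Fin u → MvPolynomial (Fin v) ℂ) (hg : ∀ i, g i ∈ mI v)
    (h : ∀ i, MvPolynomial.aeval F (g i) - MvPolynomial.X i ∈ mI u ^ 2) (K e : ℕ) :
    ∀ d, K ≤ d + e → ∀ f ∈ mI u ^ d, ∃ q : MvPolynomial (Fin v) ℂ,
      MvPolynomial.aeval F q - f ∈ mI u ^ K := by
  induction e with
  | zero =>
    intro d hd f hf
    refine ⟨0, ?_⟩
    rw [map_zero, zero_sub]
    exact Ideal.neg_mem_iff _ |>.2 (Ideal.pow_le_pow_right (by omega) hf)
  | succ e ih =>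
    intro d hd f hf
    have h1 := near_id _ (fun i => aeval_mem_one _ hF (hg i)) h d f hf
    obtain ⟨q, hq⟩ := ih (d + 1) (by omega) _ h1
    refine ⟨MvPolynomial.aeval g f - q, ?_⟩
    have e : (MvPolynomial.aeval (R := ℂ) F) (MvPolynomial.aeval g f) =
        MvPolynomial.aeval (fun i => MvPolynomial.aeval F (g i)) f := by
      have : (MvPolynomial.aeval (R := ℂ) F).comp (MvPolynomial.aeval g) =
          MvPolynomial.aeval (fun i => MvPolynomial.aeval F (g i)) := by
        ext i; simp
      exact DFunLike.congr_fun this f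
    rw [map_sub, e]
    have := (Ideal.neg_mem_iff _).2 hq
    convert this using 1
    ring

lemma exists_leftInv {k u v : ℕ} (F : Jet k u v) (B : Matrix (Fin u) (Fin v) ℂ)
    (hB : B * linPart F = 1) : ∃ L : Jet k v u, jetComp L F = idJet k u := by
  classical
  let g : Fin u → MvPolynomial (Fin v) ℂ := fun j => ∑ i, MvPolynomial.C (B j i) * MvPolynomial.X i
  have hg : ∀ j, g j ∈ mI v := fun j =>
    Ideal.sum_mem _ fun i _ => Ideal.mul_mem_left _ _ (X_mem v i)
  have h : ∀ j, MvPolynomial.aeval (toPoly F) (g j) - MvPolynomial.X j ∈ mI u ^ 2 := by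
    intro j
    have e1 : MvPolynomial.aeval (toPoly F) (g j) = ∑ i, MvPolynomial.C (B j i) * toPoly F i := by
      simp [g, MvPolynomial.algebraMap_eq]
    have e2 : (MvPolynomial.X j : MvPolynomial (Fin u) ℂ) = ∑ i, MvPolynomial.C (B j i) *
        ∑ l, MvPolynomial.C (linPart F i l) * MvPolynomial.X l := by
      simp_rw [Finset.mul_sum]
      rw [Finset.sum_comm]
      simp_rw [← mul_assoc, ← Finset.sum_mul, ← MvPolynomial.C_mul, ← map_sum,
        ← Matrix.mul_apply, hB, Matrix.one_apply]
      simp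
    rw [e1, e2, ← Finset.sum_sub_distrib]
    refine Ideal.sum_mem _ fun i _ => ?_
    rw [← mul_sub]
    exact Ideal.mul_mem_left _ _ (sub_lin_mem _ (toPoly_mem F i))
  have := lift_exists (toPoly F) (toPoly_mem F) g hg h (k + 1) (k + 1) 0 (by omega)
  choose q hq using fun j => this (MvPolynomial.X j) (by simp)
  let q' : Fin u → MvPolynomial (Fin v) ℂ := fun j =>
    q j - MvPolynomial.C (MvPolynomial.coeff 0 (q j))
  have hq' : ∀ j, q' j ∈ mI v := fun j => by
    rw [mem_iff_constantCoeff]; simp [q']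
  have hq2 : ∀ j, MvPolynomial.coeff 0 (q j) = 0 := by
    intro j
    have h1 : MvPolynomial.aeval (toPoly F) (q j) ∈ mI u := by
      have := Ideal.add_mem _ (Ideal.pow_le_self (by omega) (hq j)) (X_mem u j)
      simpa using this
    have h2 := aeval_mem_one _ (toPoly_mem F) (hq' j)
    have h3 := Ideal.sub_mem _ h1 h2
    rw [mem_iff_constantCoeff] at h3
    simpa [q', MvPolynomial.algebraMap_eq] using h3
  have hqm : ∀ j, q j ∈ mI v := fun j => (mem_iff_constantCoeff _).2 (hq2 j)
  refine ⟨mkJet k q, ?_⟩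
  conv_lhs => rw [← mkJet_toPoly F]
  rw [jetComp_mkJet _ _ hqm (toPoly_mem F), idJet]
  exact mkJet_congr _ _ (fun i => aeval_mem_one _ (toPoly_mem F) (hqm i)) (X_mem u) hq

lemma exists_leftInv_of_inj {k u v : ℕ} (F : Jet k u v)
    (h : ∀ x, (linPart F).mulVec x = 0 → x = 0) : ∃ L : Jet k v u, jetComp L F = idJet k u := by
  classical
  obtain ⟨g, hg⟩ := (Matrix.toLin' (linPart F)).exists_leftInverse_of_injective
    (LinearMap.ker_eq_bot'.2 (by simpa using h))
  refine exists_leftInv F (LinearMap.toMatrix' g) ?_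
  have := congrArg LinearMap.toMatrix' hg
  simpa [LinearMap.toMatrix'_comp] using this

lemma reg_inj {k p n : ℕ} {γ : Jet k p n} (h : γ ∈ JetReg k p n) (x : Fin p → ℂ)
    (hx : (linPart γ).mulVec x = 0) : x = 0 := by
  have h1 : Module.finrank ℂ (LinearMap.range (linPart γ).mulVecLin) = p := h
  have h2 := LinearMap.finrank_range_add_finrank_ker (linPart γ).mulVecLin
  rw [h1, Module.finrank_fin_fun] at h2
  have h3 : LinearMap.ker (linPart γ).mulVecLin = ⊥ := Submodule.finrank_eq_zero.1 (by omega)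
  exact LinearMap.ker_eq_bot'.1 h3 x hx

lemma reg_leftInv {k p n : ℕ} {γ : Jet k p n} (h : γ ∈ JetReg k p n) :
    ∃ L : Jet k n p, jetComp L γ = idJet k p :=
  exists_leftInv_of_inj γ (reg_inj h)

lemma card_mon {p : ℕ} (k : ℕ) (hp : 1 ≤ p) : Fintype.card (Mon p k) = symLe p k := by
  classical
  let s : Finset (Fin p →₀ ℕ) :=
    (Finset.Icc 1 k).biUnion fun i => (Finset.univ : Finset (Fin p)).finsuppAntidiag i
  have hs : ∀ x, x ∈ s ↔ 0 < ∑ i, x i ∧ ∑ i, x i ≤ k := by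
    intro x
    simp only [s, Finset.mem_biUnion, Finset.mem_Icc, Finset.mem_finsuppAntidiag]
    constructor
    · rintro ⟨i, hi, rfl, _⟩
      exact hi
    · intro h
      exact ⟨_, h, rfl, Finset.subset_univ _⟩
  have e : Mon p k ≃ s :=
    { toFun := fun m => ⟨Finsupp.equivFunOnFinite.symm m.1, (hs _).2 m.2⟩
      invFun := fun x => ⟨x.1, (hs _).1 x.2⟩
      left_inv := fun m => rfl
      right_inv := fun x => by simp }
  rw [Fintype.card_congr e, Fintype.card_coe, Finset.card_biUnion]
  · refine Finset.sum_congr rfl fun i hi => ?_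
    rw [Finset.card_finsuppAntidiag_nat_eq_choose, Finset.card_univ, Fintype.card_fin]
    rw [Finset.mem_Icc] at hi
    rw [← Nat.choose_symm_of_eq_add]
    omega
  · intro i _ j _ hij
    rw [Function.onFun, Finset.disjoint_left]
    intro x hx hy
    rw [Finset.mem_finsuppAntidiag] at hx hy
    exact hij (hx.1.symm.trans hy.1)

lemma ker_range {k p n N : ℕ} (hk : 1 ≤ k) {γ : Jet k p n} (h : γ ∈ JetReg k p n) {Ψ : Jet k n N}
    (hc : jetComp Ψ γ = 0) :
    LinearMap.range (linPart γ).mulVecLin ≤ LinearMap.ker (linPart Ψ).mulVecLin := by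
  have h1 : linPart Ψ * linPart γ = 0 := by
    rw [← linPart_comp hk, hc]
    ext i j; simp [linPart, toPoly]
  rintro _ ⟨x, rfl⟩
  simp [h1]

lemma kerDim_eq_iff {k p n N : ℕ} (hk : 1 ≤ k) {γ : Jet k p n} (h : γ ∈ JetReg k p n)
    {Ψ : Jet k n N} (hc : jetComp Ψ γ = 0) :
    kerDim Ψ = p ↔
      LinearMap.range (linPart γ).mulVecLin = LinearMap.ker (linPart Ψ).mulVecLin := by
  have h1 : Module.finrank ℂ (LinearMap.range (linPart γ).mulVecLin) = p := h
  constructor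
  · intro hd
    exact Submodule.eq_of_le_of_finrank_eq (ker_range hk h hc) (h1.trans hd.symm)
  · intro he
    rw [kerDim, ← he, h1]

lemma part_three {p n k N : ℕ} (hk : 1 ≤ k) (Ψ : Jet k n N) (hΨ : kerDim Ψ = p)
    (γ₁ : Jet k p n) (h1 : γ₁ ∈ JetReg k p n) (γ₂ : Jet k p n) (h2 : γ₂ ∈ JetReg k p n)
    (hc1 : jetComp Ψ γ₁ = 0) (hc2 : jetComp Ψ γ₂ = 0) :
    ∃ φ ∈ JetReg k p p, γ₁ = jetComp γ₂ φ := by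
  obtain ⟨L, hL⟩ := reg_leftInv h2
  have hz : ∀ φ : Jet k p p, jetComp (0 : Jet k p N) φ = 0 := fun φ => (compL N φ).map_zero
  have key : γ₁ = jetComp γ₂ (jetComp L γ₁) := by
    let F : Jet k n (N + p) := Fin.append Ψ L
    have hFl : ∀ i, F (Fin.castAdd p i) = Ψ i := fun i => Fin.append_left _ _ i
    have hFr : ∀ i, F (Fin.natAdd N i) = L i := fun i => Fin.append_right _ _ i
    have hF : ∀ x, (linPart F).mulVec x = 0 → x = 0 := by
      intro x hx
      have e1 : (linPart Ψ).mulVec x = 0 := by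
        funext i
        have := congrFun hx (Fin.castAdd p i)
        rwa [Matrix.mulVec, linPart_row F Ψ _ _ (hFl i)] at this
      have e2 : (linPart L).mulVec x = 0 := by
        funext i
        have := congrFun hx (Fin.natAdd N i)
        rwa [Matrix.mulVec, linPart_row F L _ _ (hFr i)] at this
      have e3 : x ∈ LinearMap.range (linPart γ₂).mulVecLin := by
        rw [(kerDim_eq_iff hk h2 hc2).1 hΨ]; exact e1
      obtain ⟨y, rfl⟩ := e3
      have e4 : linPart L * linPart γ₂ = 1 := by rw [← linPart_comp hk, hL, linPart_id hk]
      rw [Matrix.mulVecLin_apply, Matrix.mulVec_mulVec, e4, Matrix.one_mulVec] at e2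
      rw [e2, map_zero]
    obtain ⟨M, hM⟩ := exists_leftInv_of_inj F hF
    have hFF : jetComp F γ₁ = jetComp F (jetComp γ₂ (jetComp L γ₁)) := by
      funext i
      refine Fin.addCases (fun i => ?_) (fun i => ?_) i
      · rw [jetComp_row F Ψ _ _ _ (hFl i), jetComp_row F Ψ _ _ _ (hFl i), hc1,
          ← jetComp_assoc, hc2, hz]
      · rw [jetComp_row F L _ _ _ (hFr i), jetComp_row F L _ _ _ (hFr i),
          ← jetComp_assoc, hL, id_comp]
    have := congrArg (jetComp M) hFF
    rwa [← jetComp_assoc, ← jetComp_assoc, hM, id_comp, id_comp] at this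
  refine ⟨_, ?_, key⟩
  have h1' : (linPart γ₁).rank = p := h1
  rw [key, linPart_comp hk] at h1'
  have h3 := Matrix.rank_mul_le_right (linPart γ₂) (linPart (jetComp L γ₁))
  have h4 := (linPart (jetComp L γ₁)).rank_le_width
  rw [h1'] at h3
  exact le_antisymm h4 h3

lemma part_one {p n k N : ℕ} (hp : 1 ≤ p) (γ : Jet k p n) (h : γ ∈ JetReg k p n) :
    ∃ S : Submodule ℂ (Jet k n N),
        (S : Set (Jet k n N)) = {Ψ : Jet k n N | jetComp Ψ γ = 0} ∧
        Module.finrank ℂ (Jet k n N ⧸ S) = N * symLe p k := by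
  refine ⟨LinearMap.ker (compL N γ), rfl, ?_⟩
  obtain ⟨L, hL⟩ := reg_leftInv h
  have hs : Function.Surjective (compL N γ) := fun Φ => ⟨jetComp Φ L, by
    rw [compL_apply, jetComp_assoc, hL, comp_id]⟩
  rw [((compL N γ).quotKerEquivOfSurjective hs).finrank_eq]
  rw [Module.finrank_pi_fintype]
  simp [card_mon k hp]

lemma part_two {p n k N : ℕ} (hk : 1 ≤ k) (hN : n ≤ N) (γ : Jet k p n) (h : γ ∈ JetReg k p n) :
    {Ψ : Jet k n N | jetComp Ψ γ = 0} ⊆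
        closure ({Ψ : Jet k n N | jetComp Ψ γ = 0} ∩ {Ψ : Jet k n N | kerDim Ψ = p}) := by
  classical
  obtain ⟨L, hL⟩ := reg_leftInv h
  intro Ψ hΨ
  let E : Jet k n n := idJet k n - jetComp γ L
  have hE : jetComp E γ = 0 := by
    have : compL n γ E = 0 := by
      rw [map_sub, compL_apply, compL_apply, id_comp, jetComp_assoc, hL, comp_id, sub_self]
    exact this
  have hEl : linPart E + linPart γ * linPart L = 1 := by
    rw [← linPart_comp hk, ← linPart_add, sub_add_cancel, linPart_id hk]
  let Ψ₀ : Jet k n N := fun i => if hi : i.1 < n then E ⟨i.1, hi⟩ else 0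
  have hΨ₀E : ∀ i : Fin n, Ψ₀ (Fin.castLE hN i) = E i := fun i => by simp [Ψ₀]
  have hΨ₀ : jetComp Ψ₀ γ = 0 := by
    funext i
    by_cases hi : i.1 < n
    · rw [jetComp_row Ψ₀ E γ i ⟨i.1, hi⟩ (by simp [Ψ₀, hi]), hE]; rfl
    · rw [jetComp_row Ψ₀ (0 : Jet k n N) γ i i (by simp [Ψ₀, hi])]
      exact congrFun (compL N γ).map_zero i
  let T : Matrix (Fin n) (Fin n) ℂ := fun i => linPart Ψ (Fin.castLE hN i)
  have hmem : ∀ t : ℂ, jetComp (Ψ + t • Ψ₀) γ = 0 := by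
    intro t
    have : compL N γ (Ψ + t • Ψ₀) = 0 := by
      rw [map_add, map_smul, compL_apply, compL_apply, hΨ₀, hΨ]; simp
    exact this
  have hgood : ∀ t : ℂ, t ≠ 0 → -t ∉ {μ | Module.End.HasEigenvalue (Matrix.toLin' T) μ} →
      kerDim (Ψ + t • Ψ₀) = p := by
    intro t ht hev
    rw [kerDim_eq_iff hk h (hmem t)]
    refine le_antisymm (ker_range hk h (hmem t)) ?_
    intro x hx
    have hx' : (linPart (Ψ + t • Ψ₀)).mulVec x = 0 := hx
    set z := (linPart γ).mulVec ((linPart L).mulVec x) with hz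
    have hTz : T.mulVec z = 0 := by
      have h0 : z ∈ LinearMap.ker (linPart Ψ).mulVecLin := ker_range hk h hΨ ⟨_, rfl⟩
      funext i
      exact congrFun (show (linPart Ψ).mulVec z = 0 from h0) (Fin.castLE hN i)
    have hEx : (linPart E).mulVec x = x - z := by
      rw [eq_sub_iff_add_eq, hz, Matrix.mulVec_mulVec, ← Matrix.add_mulVec, hEl, Matrix.one_mulVec]
    have hsum : T.mulVec x + t • (x - z) = 0 := by
      rw [← hEx]
      funext i
      have h1 := congrFun hx' (Fin.castLE hN i)
      rw [linPart_add, linPart_smul, Matrix.add_mulVec, Matrix.smul_mulVec] at h1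
      have h2 : (linPart Ψ₀).mulVec x (Fin.castLE hN i) = (linPart E).mulVec x i := by
        rw [Matrix.mulVec, linPart_row Ψ₀ E _ _ (hΨ₀E i)]; rfl
      simp only [Pi.add_apply, Pi.smul_apply, h2] at h1
      exact h1
    have hy : T.mulVec (x - z) = (-t) • (x - z) := by
      rw [Matrix.mulVec_sub, hTz, sub_zero, neg_smul]
      exact eq_neg_of_add_eq_zero_left hsum
    have hxz : x - z = 0 := by
      by_contra hne
      exact hev (Module.End.hasEigenvalue_of_hasEigenvector
        (x := x - z) ⟨Module.End.mem_eigenspace_iff.2 (by simpa using hy), hne⟩)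
    rw [sub_eq_zero] at hxz
    rw [hxz]
    exact ⟨_, rfl⟩
  have hfin : Set.Finite {t : ℂ | -t ∈ {μ | Module.End.HasEigenvalue (Matrix.toLin' T) μ}} :=
    (Module.End.finite_hasEigenvalue (Matrix.toLin' T)).preimage neg_injective.injOn
  have htend : Filter.Tendsto (fun t : ℂ => Ψ + t • Ψ₀) (nhdsWithin 0 {0}ᶜ) (nhds Ψ) := by
    have hcont : Continuous (fun t : ℂ => Ψ + t • Ψ₀) := by fun_prop
    have := hcont.tendsto 0
    simp only [zero_smul, add_zero] at this
    exact this.mono_left nhdsWithin_le_nhds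
  refine mem_closure_of_tendsto htend ?_
  have hev : ∀ᶠ t in nhdsWithin (0 : ℂ) {0}ᶜ,
      t ∈ (({t : ℂ | -t ∈ {μ | Module.End.HasEigenvalue (Matrix.toLin' T) μ}} \ {0})ᶜ : Set ℂ) := by
    refine nhdsWithin_le_nhds ?_
    exact (hfin.subset Set.sdiff_subset).isClosed.isOpen_compl.mem_nhds (by simp)
  filter_upwards [hev, self_mem_nhdsWithin] with t ht ht0
  refine ⟨hmem t, hgood t ht0 fun hh => ht ⟨hh, ht0⟩⟩

lemma reg_id {k p : ℕ} (hk : 1 ≤ k) {φ ψ : Jet k p p} (h : jetComp φ ψ = idJet k p) :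
    φ ∈ JetReg k p p := by
  have h1 : linPart φ * linPart ψ = 1 := by rw [← linPart_comp hk, h, linPart_id hk]
  have h2 := Matrix.rank_mul_le_left (linPart φ) (linPart ψ)
  rw [h1, Matrix.rank_one, Fintype.card_fin] at h2
  exact le_antisymm (linPart φ).rank_le_width h2

lemma part_four_easy {p n k N : ℕ} (hk : 1 ≤ k) (γ₁ γ₂ : Jet k p n) (φ : Jet k p p)
    (hφ : φ ∈ JetReg k p p) (h : γ₁ = jetComp γ₂ φ) :
    {Ψ : Jet k n N | jetComp Ψ γ₁ = 0} = {Ψ : Jet k n N | jetComp Ψ γ₂ = 0} := by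
  have hz : ∀ φ : Jet k p p, jetComp (0 : Jet k p N) φ = 0 := fun φ => (compL N φ).map_zero
  obtain ⟨ψ, hψ⟩ := reg_leftInv hφ
  obtain ⟨χ, hχ⟩ := reg_leftInv (reg_id hk hψ)
  have hχφ : χ = φ := by
    rw [← comp_id χ, ← hψ, ← jetComp_assoc, hχ, id_comp]
  subst hχφ
  ext Ψ
  simp only [Set.mem_ofPred_eq]
  constructor
  · intro h1
    have : jetComp (jetComp Ψ γ₁) ψ = 0 := by rw [h1, hz]
    rwa [h, jetComp_assoc, jetComp_assoc, hχ, comp_id] at this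
  · intro h1
    rw [h, ← jetComp_assoc, h1, hz]

/-- The basic properties of the solution spaces
`S_γ = {Ψ ∈ J_k(n,N) : Ψ ∘ γ = 0}` for regular `p`-dimensional jets `γ ∈ J_k^{reg}(p,n)`:
(i) `S_γ` is a linear subspace of codimension `N·sym^{≤k}(p)`;
(ii) `S_γ ∩ J_k^o(n,N)` is dense in `S_γ`;
(iii) a `Ψ ∈ J_k^o(n,N)` belongs to at most one `S_γ`, up to reparametrization;
(iv) `S_{γ₁} = S_{γ₂}` iff `γ₁ = γ₂ ∘ φ` for some `φ ∈ J_k^{reg}(p,p)`. -/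
theorem solution_space_properties (p n k N : ℕ) (hp : 1 ≤ p) (hpn : p ≤ n) (hk : 1 ≤ k)
    (hN : n ≤ N) :
    (∀ γ ∈ JetReg k p n,
      ∃ S : Submodule ℂ (Jet k n N),
        (S : Set (Jet k n N)) = {Ψ : Jet k n N | jetComp Ψ γ = 0} ∧
        Module.finrank ℂ (Jet k n N ⧸ S) = N * symLe p k) ∧
    (∀ γ ∈ JetReg k p n,
      {Ψ : Jet k n N | jetComp Ψ γ = 0} ⊆
        closure ({Ψ : Jet k n N | jetComp Ψ γ = 0} ∩ {Ψ : Jet k n N | kerDim Ψ = p})) ∧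
    (∀ Ψ : Jet k n N, kerDim Ψ = p →
      ∀ γ₁ ∈ JetReg k p n, ∀ γ₂ ∈ JetReg k p n,
        jetComp Ψ γ₁ = 0 → jetComp Ψ γ₂ = 0 →
          ∃ φ ∈ JetReg k p p, γ₁ = jetComp γ₂ φ) ∧
    (∀ γ₁ ∈ JetReg k p n, ∀ γ₂ ∈ JetReg k p n,
      ({Ψ : Jet k n N | jetComp Ψ γ₁ = 0} = {Ψ : Jet k n N | jetComp Ψ γ₂ = 0} ↔
        ∃ φ ∈ JetReg k p p, γ₁ = jetComp γ₂ φ)) := by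
  refine ⟨fun γ h => part_one hp γ h, fun γ h => part_two hk hN γ h,
    fun Ψ hΨ γ₁ h1 γ₂ h2 c1 c2 => part_three hk Ψ hΨ γ₁ h1 γ₂ h2 c1 c2,
    fun γ₁ h1 γ₂ h2 => ⟨fun hS => ?_, fun ⟨φ, hφ, e⟩ => part_four_easy hk γ₁ γ₂ φ hφ e⟩⟩
  have h0 : (0 : Jet k n N) ∈ {Ψ : Jet k n N | jetComp Ψ γ₁ = 0} := (compL N γ₁).map_zero
  obtain ⟨Ψ, hΨ, hd⟩ := closure_nonempty_iff.1 ⟨_, part_two hk hN γ₁ h1 h0⟩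
  have hΨ2 : Ψ ∈ {Ψ : Jet k n N | jetComp Ψ γ₂ = 0} := hS ▸ hΨ
  exact part_three hk Ψ hd γ₁ h1 γ₂ h2 hΨ hΨ2

end JetPaper
end
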